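/- arXiv:1506.02855 — 2 statements merged into one kernel-verified Lean document; each statement's English description precedes it below -/
import Mathlib

section
/- Assume cc' ≠ 1 and let 𝓛 = d*(C⁰(G)) + S d*(C⁰(G)) ⊆ C¹(G). Then W maps 𝓛 onto itself: W(𝓛) = 𝓛. -/
/-!
Write `T = d S d*`. Since `d d* = c'`, one has
`W (d*f + S d*g) = d*(-g) + S d*((c c' - 1) f + c T g)`.
Hence `W` preserves `𝓛`, acting on the pairs `(f, g)` that parametrize it by
`(f, g) ↦ (-g, (c c' - 1) f + c T g)`. As `c c' ≠ 1`, this map of pairs is invertible, so every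
element of `𝓛` is the image of an element of `𝓛`.
-/

noncomputable section

open Finset

variable {V : Type*} [Fintype V] [DecidableEq V] (G : SimpleGraph V) [DecidableRel G.Adj]

/-- The flip operator `(Sψ)(e) = ψ(ē)` on `C¹(G)`. -/
def flipOp (ψ : G.Dart → ℂ) : G.Dart → ℂ := fun e => ψ e.symm

/-- The boundary operator `(dψ)(u) = Σ_{e : t(e)=u} conj(w(ē)) ψ(e)`. -/
def bdW (w : G.Dart → ℂ) (ψ : G.Dart → ℂ) : V → ℂ :=
  fun u => ∑ e ∈ Finset.univ.filter (fun e : G.Dart => e.snd = u),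
    (starRingEnd ℂ) (w e.symm) * ψ e

/-- The coboundary operator `(d*f)(e) = f(t(e)) m_V(t(e)) w(ē) / m_A(e)`, adjoint of `d`
with respect to the weighted inner products. -/
def cobdW (w : G.Dart → ℂ) (mV : V → ℝ) (mA : G.Dart → ℝ) (f : V → ℂ) : G.Dart → ℂ :=
  fun e => f e.snd * (mV e.snd : ℂ) * w e.symm / (mA e : ℂ)

/-- The operator `W = S(c d*d − 1)` on `C¹(G)`. -/
def Wop (w : G.Dart → ℂ) (mV : V → ℝ) (mA : G.Dart → ℝ) (c : ℂ) (ψ : G.Dart → ℂ) :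
    G.Dart → ℂ :=
  flipOp G (fun e => c * cobdW G w mV mA (bdW G w ψ) e - ψ e)

/-- The subspace `𝓛 = d*(C⁰(G)) + S d*(C⁰(G)) ⊆ C¹(G)`, as a set. -/
def Lsub (w : G.Dart → ℂ) (mV : V → ℝ) (mA : G.Dart → ℝ) : Set (G.Dart → ℂ) :=
  {ψ | ∃ f g : V → ℂ, ψ = fun e => cobdW G w mV mA f e + cobdW G w mV mA g e.symm}

/-- The identity `d d* = c' · 1`. -/
lemma bdW_cobdW (w : G.Dart → ℂ) (mV : V → ℝ) (mA : G.Dart → ℝ) (c' : ℝ)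
    (hc' : ∀ u : V, ∑ e ∈ Finset.univ.filter (fun e : G.Dart => e.snd = u),
      mV u * Complex.normSq (w e.symm) / mA e = c') (f : V → ℂ) (u : V) :
    bdW G w (cobdW G w mV mA f) u = c' * f u := by
  rw [← hc' u, Complex.ofReal_sum, Finset.sum_mul]
  unfold bdW cobdW
  refine Finset.sum_congr rfl fun e he => ?_
  rw [(Finset.mem_filter.mp he).2]
  push_cast
  rw [Complex.normSq_eq_conj_mul_self]
  ring

/-- The action of `W` on a pair `(f, g)` representing an element of `𝓛`. -/
lemma Wop_apply_pair (w : G.Dart → ℂ) (mV : V → ℝ) (mA : G.Dart → ℝ) (c : ℂ) (c' : ℝ)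
    (hc' : ∀ u : V, ∑ e ∈ Finset.univ.filter (fun e : G.Dart => e.snd = u),
      mV u * Complex.normSq (w e.symm) / mA e = c') (f g : V → ℂ) :
    Wop G w mV mA c (fun e => cobdW G w mV mA f e + cobdW G w mV mA g e.symm) =
      fun e => cobdW G w mV mA (fun u => -g u) e +
        cobdW G w mV mA (fun u => (c * c' - 1) * f u +
          c * bdW G w (flipOp G (cobdW G w mV mA g)) u) e.symm := by
  have hd : bdW G w (fun e => cobdW G w mV mA f e + cobdW G w mV mA g e.symm) =
      fun u => c' * f u + bdW G w (flipOp G (cobdW G w mV mA g)) u := by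
    funext u
    rw [← bdW_cobdW G w mV mA c' hc' f u]
    simp only [bdW, flipOp, mul_add, Finset.sum_add_distrib]
  funext e
  simp only [Wop, hd]
  generalize bdW G w (flipOp G (cobdW G w mV mA g)) = t
  simp only [flipOp, cobdW, SimpleGraph.Dart.symm_symm]
  ring

/-- If `cc' ≠ 1` then `W` maps `𝓛 = d*(C⁰(G)) + S d*(C⁰(G))` onto itself:
`W(𝓛) = 𝓛`. -/
theorem statement5 (hG : G.Connected) (w : G.Dart → ℂ) (mV : V → ℝ) (mA : G.Dart → ℝ)
    (hmVpos : ∀ u : V, 0 < mV u) (hmApos : ∀ e : G.Dart, 0 < mA e)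
    (c : ℂ) (c' : ℝ)
    (hc' : ∀ u : V, ∑ e ∈ Finset.univ.filter (fun e : G.Dart => e.snd = u),
      mV u * Complex.normSq (w e.symm) / mA e = c')
    (hcc' : c * (c' : ℂ) ≠ 1) :
    (Wop G w mV mA c) '' (Lsub G w mV mA) = Lsub G w mV mA := by
  apply Set.Subset.antisymm
  · rintro _ ⟨_, ⟨f, g, rfl⟩, rfl⟩
    exact ⟨_, _, Wop_apply_pair G w mV mA c c' hc' f g⟩
  · rintro _ ⟨f, g, rfl⟩
    have hne : c * (c' : ℂ) - 1 ≠ 0 := sub_ne_zero.mpr hcc'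
    -- The preimage solves `-g₀ = f` and `(c c' - 1) f₀ + c T g₀ = g`.
    refine ⟨_, ⟨fun u => (g u - c * bdW G w (flipOp G
      (cobdW G w mV mA (fun v => -f v))) u) / (c * c' - 1), fun v => -f v, rfl⟩, ?_⟩
    rw [Wop_apply_pair G w mV mA c c' hc']
    simp only [neg_neg, mul_div_cancel₀ _ hne, sub_add_cancel]

end
end

section
/- Under Setting 1, with T the self-adjoint operator (Tf)(u) = Σ_{e : o(e)=u} w₁(e) conj(w₁(ē)) f(t(e)) and φ₁(x) = (x + x⁻¹)/2, the spectrum of U₁ = S(2 d₁* d₁ − 1), as a set, is: σ(U₁) = φ₁⁻¹(σ(T)) ∪ {1} ∪ {−1} if |E| − |V| + 𝟙[1 ∈ σ(T)] > 0 and |E| − |V| + 𝟙[−1 ∈ σ(T)] > 0; σ(U₁) = φ₁⁻¹(σ(T)) ∪ {1} if |E| − |V| + 𝟙[1 ∈ σ(T)] > 0 and |E| − |V| + 𝟙[−1 ∈ σ(T)] ≤ 0; σ(U₁) = φ₁⁻¹(σ(T)) ∪ {−1} if |E| − |V| + 𝟙[1 ∈ σ(T)] ≤ 0 and |E| − |V|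 + 𝟙[−1 ∈ σ(T)] > 0; and σ(U₁) = φ₁⁻¹(σ(T)) otherwise. Here φ₁⁻¹(Y) = {z ∈ ℂ \ {0} : (z + z⁻¹)/2 ∈ Y}. -/
/-!
Write `d = bd1`, `d* = cobd1`, `S = flipOp`. The normalisation of `w₁` gives `d d* = 1`, and
`M = d S d*` is the entrywise complex conjugate of `T`. Since `T` is Hermitian its eigenvalues are
real, so `M` and `T` have the same spectrum (`mem_specV_iff`).

If `U₁ ψ = z ψ`, then applying `d` and `d S` to `2 d* d ψ - ψ = z S ψ` gives
`M (d ψ) = ((z + z⁻¹) / 2) d ψ`. So either `z` is inherited from `T`, or `d ψ = 0` and `S ψ = -z ψ`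
with `z = ±1`. Conversely, an eigenvector `f` of `M` for `(z + z⁻¹) / 2` yields the eigenvector
`d* f - z S d* f` of `U₁`, or, if that vanishes, `d* f`.

For `ε = ±1`, the space `{ψ | S ψ = -ε ψ}` is parametrised by functions on edges
(`twist`), so it has dimension `|E|`. If `|V| < |E|`, then `d` has a kernel on it. If
`ε ∉ σ(T)`, then `d` maps it onto `C⁰(G)`: a linear functional annihilating the image is given by
a vector `c` with `T c = ε c` (`surjective_bdTwist`). Hence for `|E| ≤ |V|` and `ε ∉ σ(T)` the
kernel is trivial. This gives `mem_specA_iff`, from which the four cases follow.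
-/

noncomputable section

open Finset

variable {V : Type*} [Fintype V] [DecidableEq V] (G : SimpleGraph V) [DecidableRel G.Adj]

/-- The boundary operator `(d₁ψ)(u) = Σ_{e : t(e)=u} conj(w₁(ē)) ψ(e)` of Setting 1. -/
def bd1 (w₁ : G.Dart → ℂ) (ψ : G.Dart → ℂ) : V → ℂ :=
  fun u => ∑ e ∈ Finset.univ.filter (fun e : G.Dart => e.snd = u),
    (starRingEnd ℂ) (w₁ e.symm) * ψ e

/-- The coboundary operator `(d₁*f)(e) = w₁(ē) f(t(e))` of Setting 1. -/
def cobd1 (w₁ : G.Dart → ℂ) (f : V → ℂ) : G.Dart → ℂ :=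
  fun e => w₁ e.symm * f e.snd

/-- The Szegedy-walk operator `U₁ = S(2 d₁* d₁ − 1)` of Setting 1. -/
def U1 (w₁ : G.Dart → ℂ) (ψ : G.Dart → ℂ) : G.Dart → ℂ :=
  flipOp G (fun e => 2 * cobd1 G w₁ (bd1 G w₁ ψ) e - ψ e)

/-- The operator `(Tf)(u) = Σ_{e : o(e)=u} w₁(e) conj(w₁(ē)) f(t(e))` on `C⁰(G)`. -/
def TopW (w₁ : G.Dart → ℂ) (f : V → ℂ) : V → ℂ :=
  fun u => ∑ e ∈ Finset.univ.filter (fun e : G.Dart => e.fst = u),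
    w₁ e * (starRingEnd ℂ) (w₁ e.symm) * f e.snd

/-- The set of eigenvalues of an operator on `C⁰(G)`. -/
def specV (M : (V → ℂ) → (V → ℂ)) : Set ℂ :=
  {z : ℂ | ∃ f : V → ℂ, f ≠ 0 ∧ M f = fun u => z * f u}

/-- The set of eigenvalues of an operator on `C¹(G)`. -/
def specA (M : (G.Dart → ℂ) → (G.Dart → ℂ)) : Set ℂ :=
  {z : ℂ | ∃ ψ : G.Dart → ℂ, ψ ≠ 0 ∧ M ψ = fun e => z * ψ e}

/-- `φ₁⁻¹(Y) = {z ∈ ℂ \ {0} : (z + z⁻¹)/2 ∈ Y}`. -/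
def phi1inv (Y : Set ℂ) : Set ℂ := {z : ℂ | z ≠ 0 ∧ (z + z⁻¹) / 2 ∈ Y}

set_option linter.unusedSectionVars false

/-! ### Sums over darts and linearity -/

lemma sum_fst (F : G.Dart → ℂ) :
    ∑ u : V, ∑ e ∈ Finset.univ.filter (fun e : G.Dart => e.fst = u), F e = ∑ e, F e :=
  Finset.sum_fiberwise _ _ _

lemma sum_snd (F : G.Dart → ℂ) :
    ∑ u : V, ∑ e ∈ Finset.univ.filter (fun e : G.Dart => e.snd = u), F e = ∑ e, F e :=
  Finset.sum_fiberwise _ _ _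

lemma sum_symm (F : G.Dart → ℂ) : ∑ e : G.Dart, F e.symm = ∑ e, F e :=
  Function.Bijective.sum_comp (SimpleGraph.Dart.symm_involutive (G := G)).bijective F

lemma sum_snd_eq_fst (F : G.Dart → ℂ) (u : V) :
    ∑ e ∈ Finset.univ.filter (fun e : G.Dart => e.snd = u), F e =
      ∑ e ∈ Finset.univ.filter (fun e : G.Dart => e.fst = u), F e.symm := by
  rw [Finset.sum_filter, Finset.sum_filter, ← sum_symm]
  rfl

lemma flipOp_flipOp (ψ : G.Dart → ℂ) : flipOp G (flipOp G ψ) = ψ := by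
  funext e; simp [flipOp]

lemma bd1_add (w₁ ψ φ : G.Dart → ℂ) : bd1 G w₁ (ψ + φ) = bd1 G w₁ ψ + bd1 G w₁ φ := by
  funext u; simp [bd1, mul_add, Finset.sum_add_distrib]

lemma bd1_smul (w₁ ψ : G.Dart → ℂ) (z : ℂ) : bd1 G w₁ (z • ψ) = z • bd1 G w₁ ψ := by
  funext u; simp [bd1, mul_left_comm, Finset.mul_sum]

lemma cobd1_smul (w₁ : G.Dart → ℂ) (f : V → ℂ) (z : ℂ) :
    cobd1 G w₁ (z • f) = z • cobd1 G w₁ f := by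
  funext e; simp [cobd1, mul_left_comm]

lemma cobd1_add (w₁ : G.Dart → ℂ) (f g : V → ℂ) :
    cobd1 G w₁ (f + g) = cobd1 G w₁ f + cobd1 G w₁ g := by
  funext e; simp [cobd1, mul_add]

lemma flip_smul (ψ : G.Dart → ℂ) (z : ℂ) : flipOp G (z • ψ) = z • flipOp G ψ := rfl

lemma flip_add (ψ φ : G.Dart → ℂ) : flipOp G (ψ + φ) = flipOp G ψ + flipOp G φ := rfl

lemma U1_eq (w₁ ψ : G.Dart → ℂ) :
    U1 G w₁ ψ = (2 : ℂ) • flipOp G (cobd1 G w₁ (bd1 G w₁ ψ)) + (-1 : ℂ) • flipOp G ψ := by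
  funext e; simp [U1, flipOp, sub_eq_add_neg]

lemma bd1_cobd1 (w₁ : G.Dart → ℂ)
    (hw₁ : ∀ u : V, ∑ e ∈ Finset.univ.filter (fun e : G.Dart => e.fst = u),
      Complex.normSq (w₁ e) = 1) (f : V → ℂ) : bd1 G w₁ (cobd1 G w₁ f) = f := by
  funext u
  have h : ((∑ e ∈ Finset.univ.filter (fun e : G.Dart => e.fst = u),
      Complex.normSq (w₁ e) : ℝ) : ℂ) = 1 := by rw [hw₁]; simp
  rw [bd1, sum_snd_eq_fst]
  calc _ = ∑ e ∈ Finset.univ.filter (fun e : G.Dart => e.fst = u),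
        (Complex.normSq (w₁ e) : ℂ) * f u := by
        refine Finset.sum_congr rfl fun e he => ?_
        obtain rfl : e.fst = u := by simpa using he
        simp [cobd1, Complex.normSq_eq_conj_mul_self, mul_assoc]
    _ = f u := by rw [← Finset.sum_mul, ← Complex.ofReal_sum, h, one_mul]

/-! ### The spectra of `T` and `d S d*` -/

/-- `d S d*` is the entrywise complex conjugate of `T`. -/
lemma bd1_flip_cobd1 (w₁ : G.Dart → ℂ) (f : V → ℂ) :
    bd1 G w₁ (flipOp G (cobd1 G w₁ f)) = star (TopW G w₁ (star f)) := by
  funext u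
  rw [bd1, sum_snd_eq_fst]
  simp only [Pi.star_apply, TopW, star_sum, flipOp, cobd1, SimpleGraph.Dart.symm_symm]
  refine Finset.sum_congr rfl fun e _ => ?_
  simp [mul_assoc]

/-- `T` is Hermitian, so its eigenvalues are real. -/
lemma conj_of_mem_specV (w₁ : G.Dart → ℂ) {z : ℂ} {f : V → ℂ} (hf : f ≠ 0)
    (h : TopW G w₁ f = fun u => z * f u) : star z = z := by
  have key : ∑ u, star (f u) * TopW G w₁ f u =
      ∑ e : G.Dart, w₁ e * star (w₁ e.symm) * (star (f e.fst) * f e.snd) := by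
    rw [← sum_fst]
    refine Finset.sum_congr rfl fun u _ => ?_
    rw [TopW, Finset.mul_sum]
    refine Finset.sum_congr rfl fun e he => ?_
    obtain rfl : e.fst = u := by simpa using he
    simp only [starRingEnd_apply]; ring
  have hs : star (∑ u, star (f u) * TopW G w₁ f u) = ∑ u, star (f u) * TopW G w₁ f u := by
    rw [key, star_sum]
    conv_rhs => rw [← sum_symm]
    refine Finset.sum_congr rfl fun e _ => ?_
    simp only [star_mul', star_star, SimpleGraph.Dart.symm_symm]
    change _ = w₁ e.symm * star (w₁ e) * (star (f e.snd) * f e.fst)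
    ring
  have hN : ∑ u, star (f u) * TopW G w₁ f u = z * ∑ u, ((Complex.normSq (f u) : ℝ) : ℂ) := by
    rw [h, Finset.mul_sum]
    refine Finset.sum_congr rfl fun u _ => ?_
    rw [Complex.normSq_eq_conj_mul_self, starRingEnd_apply]; ring
  rw [hN, ← Complex.ofReal_sum, star_mul'] at hs
  have hne : ((∑ u, Complex.normSq (f u) : ℝ) : ℂ) ≠ 0 := by
    rw [Complex.ofReal_ne_zero]
    intro h0
    rw [Finset.sum_eq_zero_iff_of_nonneg fun u _ => Complex.normSq_nonneg _] at h0
    exact hf (funext fun u => Complex.normSq_eq_zero.1 (h0 u (Finset.mem_univ u)))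
  apply mul_right_cancel₀ hne
  simpa using hs

lemma mem_specV_iff (w₁ : G.Dart → ℂ) (z : ℂ) : z ∈ specV (TopW G w₁) ↔
    ∃ f : V → ℂ, f ≠ 0 ∧ bd1 G w₁ (flipOp G (cobd1 G w₁ f)) = z • f := by
  constructor
  · rintro ⟨f, hf, h⟩
    refine ⟨star f, by simpa using hf, ?_⟩
    have hz := conj_of_mem_specV G w₁ hf h
    rw [bd1_flip_cobd1, star_star, h]
    funext u
    simp only [Pi.star_apply, star_mul', hz, Pi.smul_apply, smul_eq_mul]
  · rintro ⟨f, hf, h⟩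
    have hT : TopW G w₁ (star f) = fun u => star z * star f u := by
      rw [bd1_flip_cobd1] at h
      rw [← star_star (TopW G w₁ (star f)), h]
      funext u
      simp
    have hf' : star f ≠ 0 := by simpa using hf
    have hz := conj_of_mem_specV G w₁ hf' hT
    rw [star_star] at hz
    exact ⟨star f, hf', by rw [hT, ← hz]⟩

/-! ### Eigenvectors of `U₁` and of `T` -/

/-- An eigenvector of `U₁` descends to one of `T`, unless it lies in `ker d`, where `U₁ = -S`. -/
lemma mem_of_eigen (w₁ : G.Dart → ℂ)
    (hw₁ : ∀ u : V, ∑ e ∈ Finset.univ.filter (fun e : G.Dart => e.fst = u),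
      Complex.normSq (w₁ e) = 1) {z : ℂ} {ψ : G.Dart → ℂ} (hψ : ψ ≠ 0)
    (h : U1 G w₁ ψ = fun e => z * ψ e) :
    z ∈ phi1inv (specV (TopW G w₁)) ∨
      ((z = 1 ∨ z = -1) ∧ bd1 G w₁ ψ = 0 ∧ flipOp G ψ = (-z) • ψ) := by
  have h1 : (2 : ℂ) • flipOp G (cobd1 G w₁ (bd1 G w₁ ψ)) + (-1 : ℂ) • flipOp G ψ = z • ψ := by
    rw [← U1_eq, h]; rfl
  have h2 : (2 : ℂ) • cobd1 G w₁ (bd1 G w₁ ψ) + (-1 : ℂ) • ψ = z • flipOp G ψ := by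
    have := congrArg (flipOp G) h1
    rwa [flip_add, flip_smul, flip_smul, flip_smul, flipOp_flipOp, flipOp_flipOp] at this
  have h3 : bd1 G w₁ ψ = z • bd1 G w₁ (flipOp G ψ) := by
    have := congrArg (bd1 G w₁) h2
    rw [bd1_add, bd1_smul, bd1_smul, bd1_smul, bd1_cobd1 G w₁ hw₁] at this
    rw [← this]; module
  have h4 : (2 : ℂ) • bd1 G w₁ (flipOp G (cobd1 G w₁ (bd1 G w₁ ψ))) +
      (-1 : ℂ) • bd1 G w₁ (flipOp G ψ) = z • bd1 G w₁ ψ := by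
    have := congrArg (bd1 G w₁) h1
    rwa [bd1_add, bd1_smul, bd1_smul, bd1_smul] at this
  by_cases hd : bd1 G w₁ ψ = 0
  · right
    have hc : cobd1 G w₁ (0 : V → ℂ) = 0 := by funext e; simp [cobd1]
    have hz0 : flipOp G (0 : G.Dart → ℂ) = 0 := rfl
    rw [hd, hc, hz0, smul_zero, zero_add] at h1
    have h5 : flipOp G ψ = (-z) • ψ := by rw [neg_smul, ← h1]; simp
    refine ⟨?_, hd, h5⟩
    have h6 := flipOp_flipOp G ψ
    rw [h5, flip_smul, h5, smul_smul] at h6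
    obtain ⟨e, he⟩ := Function.ne_iff.1 hψ
    have h7 := congrFun h6 e
    simp only [Pi.smul_apply, smul_eq_mul, Pi.zero_apply] at h7 he
    have h8 : z * z = 1 := mul_right_cancel₀ he (by linear_combination h7)
    exact mul_self_eq_one_iff.1 h8
  · left
    have hz : z ≠ 0 := by
      rintro rfl
      exact hd (by rw [h3, zero_smul])
    refine ⟨hz, (mem_specV_iff G w₁ _).2 ⟨_, hd, ?_⟩⟩
    have h5 : bd1 G w₁ (flipOp G ψ) = z⁻¹ • bd1 G w₁ ψ := by
      rw [h3, smul_smul, inv_mul_cancel₀ hz, one_smul]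
    rw [h5] at h4
    funext u
    have h6 := congrFun h4 u
    simp only [Pi.smul_apply, Pi.add_apply, smul_eq_mul] at h6 ⊢
    linear_combination h6 / 2

/-- Every point of `φ₁⁻¹(σ(T))` is an eigenvalue of `U₁`. -/
lemma inherited (w₁ : G.Dart → ℂ)
    (hw₁ : ∀ u : V, ∑ e ∈ Finset.univ.filter (fun e : G.Dart => e.fst = u),
      Complex.normSq (w₁ e) = 1) {z : ℂ} (h : z ∈ phi1inv (specV (TopW G w₁))) :
    z ∈ specA G (U1 G w₁) := by
  obtain ⟨hz, h⟩ := h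
  obtain ⟨f, hf, hM⟩ := (mem_specV_iff G w₁ _).1 h
  have hdf : cobd1 G w₁ f ≠ 0 := by
    intro h0
    apply hf
    rw [← bd1_cobd1 G w₁ hw₁ f, h0]
    funext u; simp [bd1]
  by_cases h0 : cobd1 G w₁ f + (-z) • flipOp G (cobd1 G w₁ f) = 0
  · -- Here `d* f = z S d* f`, so `d* f` lies in the range of `d*` and `U₁` acts on it as `S`.
    refine ⟨cobd1 G w₁ f, hdf, ?_⟩
    have h1 := congrArg (flipOp G) h0
    rw [flip_add, flip_smul, flipOp_flipOp] at h1
    rw [U1_eq, bd1_cobd1 G w₁ hw₁]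
    funext e
    have h2 := congrFun h1 e
    simp only [Pi.smul_apply, Pi.add_apply, smul_eq_mul] at h2 ⊢
    change _ = (0 : ℂ) at h2
    linear_combination h2
  · refine ⟨_, h0, ?_⟩
    rw [U1_eq, bd1_add, bd1_smul, bd1_cobd1 G w₁ hw₁, hM, cobd1_add, cobd1_smul, cobd1_smul,
      flip_add, flip_add, flip_smul, flip_smul, flip_smul, flipOp_flipOp]
    funext e
    simp only [Pi.smul_apply, Pi.add_apply, smul_eq_mul]
    field_simp
    ring

/-! ### The eigenspaces of `S` in edge coordinates -/

/-- An arbitrary orientation: a chosen dart on each edge. -/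
def orient (e : G.edgeSet) : G.Dart :=
  Classical.choose (show ∃ d : G.Dart, d.edge = e.1 by
    obtain ⟨e, he⟩ := e
    induction e using Sym2.ind with
    | _ a b => exact ⟨⟨(a, b), he⟩, rfl⟩)

lemma orient_edge (e : G.edgeSet) : (orient G e).edge = e.1 :=
  Classical.choose_spec (_ : ∃ d : G.Dart, d.edge = e.1)

/-- Extension of a function on edges to the function `ψ` on darts agreeing with it on the chosen
darts and satisfying `S ψ = -ε ψ` (for `ε = ±1`). -/
def twist (ε : ℂ) (g : G.edgeSet → ℂ) : G.Dart → ℂ := fun d =>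
  (if d = orient G ⟨d.edge, d.edge_mem⟩ then 1 else -ε) * g ⟨d.edge, d.edge_mem⟩

lemma twist_orient (ε : ℂ) (g : G.edgeSet → ℂ) (e : G.edgeSet) :
    twist G ε g (orient G e) = g e := by
  have h : (⟨(orient G e).edge, (orient G e).edge_mem⟩ : G.edgeSet) = e :=
    Subtype.ext (orient_edge G e)
  simp [twist, h]

lemma eq_orient_or (d : G.Dart) :
    d = orient G ⟨d.edge, d.edge_mem⟩ ∨ d.symm = orient G ⟨d.edge, d.edge_mem⟩ := by
  have h := orient_edge G ⟨d.edge, d.edge_mem⟩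
  rcases SimpleGraph.dart_edge_eq_iff _ _ |>.1 h with h | h
  · exact Or.inl h.symm
  · exact Or.inr h.symm

lemma flip_twist {ε : ℂ} (hε : ε * ε = 1) (g : G.edgeSet → ℂ) :
    flipOp G (twist G ε g) = (-ε) • twist G ε g := by
  funext d
  have hs : (⟨d.symm.edge, d.symm.edge_mem⟩ : G.edgeSet) = ⟨d.edge, d.edge_mem⟩ :=
    Subtype.ext d.edge_symm
  simp only [flipOp, twist, hs, Pi.smul_apply, smul_eq_mul]
  rcases eq_orient_or G d with h | h
  · rw [← h, if_neg d.symm_ne, if_pos rfl, one_mul]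
  · rw [← h, if_pos rfl, if_neg d.symm_ne.symm]
    linear_combination (-g ⟨d.edge, d.edge_mem⟩) * hε

/-- Every `ψ` with `S ψ = -ε ψ` comes from its values on the chosen darts. -/
lemma twist_restrict {ε : ℂ} {ψ : G.Dart → ℂ} (h : flipOp G ψ = (-ε) • ψ) :
    twist G ε (fun e => ψ (orient G e)) = ψ := by
  funext d
  simp only [twist]
  rcases eq_orient_or G d with h' | h'
  · rw [← h', if_pos rfl, one_mul]
  · rw [← h', if_neg d.symm_ne.symm]
    have := congrFun h d.symm
    simp only [flipOp, SimpleGraph.Dart.symm_symm, Pi.smul_apply, smul_eq_mul] at this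
    exact this.symm

/-- The boundary operator restricted to `{ψ | S ψ = -ε ψ}`, in edge coordinates. -/
def bdTwist (w₁ : G.Dart → ℂ) (ε : ℂ) : (G.edgeSet → ℂ) →ₗ[ℂ] (V → ℂ) where
  toFun g := bd1 G w₁ (twist G ε g)
  map_add' g h := by
    rw [← bd1_add]; congr 1; funext d; simp [twist, mul_add]
  map_smul' c g := by
    rw [RingHom.id_apply, ← bd1_smul]; congr 1; funext d; simp [twist, mul_left_comm]

lemma surjective_bdTwist (w₁ : G.Dart → ℂ)
    (hw₁ : ∀ u : V, ∑ e ∈ Finset.univ.filter (fun e : G.Dart => e.fst = u),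
      Complex.normSq (w₁ e) = 1) {ε : ℂ} (hε : ε * ε = 1) (hT : ε ∉ specV (TopW G w₁)) :
    Function.Surjective (bdTwist G w₁ ε) := by
  rw [← LinearMap.range_eq_top]
  by_contra hr
  obtain ⟨l, hl, hle⟩ := Submodule.exists_le_ker_of_lt_top _ (lt_top_iff_ne_top.2 hr)
  set c : V → ℂ := fun u => l (Pi.single u 1) with hc
  have hlc : ∀ f, l f = ∑ u, c u * f u := by
    intro f
    conv_lhs => rw [← Finset.univ_sum_single f, map_sum]
    refine Finset.sum_congr rfl fun u _ => ?_
    have : Pi.single u (f u) = f u • (Pi.single u 1 : V → ℂ) := by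
      rw [← Pi.single_smul]; simp
    rw [this, map_smul, smul_eq_mul, mul_comm]
  have hann : ∀ ψ : G.Dart → ℂ, flipOp G ψ = (-ε) • ψ →
      ∑ e : G.Dart, c e.snd * ((starRingEnd ℂ) (w₁ e.symm) * ψ e) = 0 := by
    intro ψ hψ
    have h1 : l (bd1 G w₁ ψ) = 0 := by
      have : bdTwist G w₁ ε (fun e => ψ (orient G e)) = bd1 G w₁ ψ :=
        congrArg (bd1 G w₁) (twist_restrict G hψ)
      rw [← this]
      exact hle ⟨_, rfl⟩
    rw [hlc] at h1
    rw [← h1, ← sum_snd]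
    refine Finset.sum_congr rfl fun u _ => ?_
    rw [bd1, Finset.mul_sum]
    refine Finset.sum_congr rfl fun e he => ?_
    obtain rfl : e.snd = u := by simpa using he
    rfl
  -- Testing against `δ_e - ε δ_ē` compares the two darts of an edge.
  have hpt : ∀ e : G.Dart, c e.snd * (starRingEnd ℂ) (w₁ e.symm) =
      ε * (c e.fst * (starRingEnd ℂ) (w₁ e)) := by
    intro e
    have h := hann (Pi.single e 1 + (-ε) • Pi.single e.symm 1) (by
      funext d
      have h1 : (Pi.single e 1 : G.Dart → ℂ) d.symm = (Pi.single e.symm 1 : G.Dart → ℂ) d := by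
        simp only [Pi.single_apply]
        congr 1
        exact propext ⟨fun h => by rw [← h]; simp, fun h => by rw [h]; simp⟩
      have h2 : (Pi.single e.symm 1 : G.Dart → ℂ) d.symm = (Pi.single e 1 : G.Dart → ℂ) d := by
        simp only [Pi.single_apply]
        congr 1
        exact propext ⟨fun h => SimpleGraph.Dart.symm_involutive.injective h,
          fun h => by rw [h]⟩
      simp only [flipOp, Pi.add_apply, Pi.smul_apply, smul_eq_mul, h1, h2]
      linear_combination (-(Pi.single e.symm 1 : G.Dart → ℂ) d) * hε)
    simp only [Pi.add_apply, Pi.smul_apply, smul_eq_mul, Pi.single_apply, mul_add,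
      Finset.sum_add_distrib, mul_ite, mul_one, mul_zero, Finset.sum_ite_eq', Finset.mem_univ,
      if_true, SimpleGraph.Dart.symm_symm] at h
    change _ + c e.fst * _ = 0 at h
    linear_combination h
  refine hT ⟨c, ?_, ?_⟩
  · intro h0
    apply hl
    refine LinearMap.ext fun f => ?_
    rw [hlc, h0]
    simp
  · funext u
    have h1 := congrFun (bd1_cobd1 G w₁ hw₁ c) u
    rw [bd1, sum_snd_eq_fst] at h1
    rw [← h1, TopW, Finset.mul_sum]
    refine Finset.sum_congr rfl fun e _ => ?_
    simp only [cobd1, SimpleGraph.Dart.symm_symm]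
    change _ = ε * (_ * (_ * c e.fst))
    linear_combination w₁ e * hpt e

lemma finrank_edges : Module.finrank ℂ (G.edgeSet → ℂ) = G.edgeFinset.card := by
  rw [Module.finrank_fintype_fun_eq_card, SimpleGraph.edgeFinset_card]

/-! ### The spectrum of `U₁` -/

/-- The spectrum of `U₁`: inherited part, together with `±1` as soon as `|V| < |E|`. -/
lemma mem_specA_iff (w₁ : G.Dart → ℂ)
    (hw₁ : ∀ u : V, ∑ e ∈ Finset.univ.filter (fun e : G.Dart => e.fst = u),
      Complex.normSq (w₁ e) = 1) (z : ℂ) :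
    z ∈ specA G (U1 G w₁) ↔ z ∈ phi1inv (specV (TopW G w₁)) ∨
      ((z = 1 ∨ z = -1) ∧ Fintype.card V < G.edgeFinset.card) := by
  constructor
  · rintro ⟨ψ, hψ, h⟩
    rcases mem_of_eigen G w₁ hw₁ hψ h with h | ⟨hz, hd, hS⟩
    · exact Or.inl h
    by_cases hT : z ∈ specV (TopW G w₁)
    · left
      rcases hz with rfl | rfl
      · exact ⟨one_ne_zero, by norm_num [hT]⟩
      · exact ⟨by norm_num, by norm_num [hT]⟩
    right
    refine ⟨hz, ?_⟩
    have hsur := surjective_bdTwist G w₁ hw₁ (mul_self_eq_one_iff.2 hz) hT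
    have hle := LinearMap.finrank_le_finrank_of_surjective hsur
    rw [finrank_edges, Module.finrank_fintype_fun_eq_card] at hle
    refine lt_of_le_of_ne hle fun heq => hψ ?_
    have hinj := (LinearMap.injective_iff_surjective_of_finrank_eq_finrank
      (by rw [finrank_edges, Module.finrank_fintype_fun_eq_card, heq])).2 hsur
    have h0 : bdTwist G w₁ z (fun e => ψ (orient G e)) = 0 :=
      (congrArg (bd1 G w₁) (twist_restrict G hS)).trans hd
    have h1 := hinj (h0.trans (map_zero _).symm)
    rw [← twist_restrict G hS, h1]
    funext d; simp [twist]
  · rintro (h | ⟨hz, hlt⟩)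
    · exact inherited G w₁ hw₁ h
    have hker : LinearMap.ker (bdTwist G w₁ z) ≠ ⊥ :=
      LinearMap.ker_ne_bot_of_finrank_lt
        (by rwa [finrank_edges, Module.finrank_fintype_fun_eq_card])
    obtain ⟨g, hg, hg0⟩ := Submodule.exists_mem_ne_zero_of_ne_bot hker
    have hd : bd1 G w₁ (twist G z g) = 0 := hg
    refine ⟨twist G z g, fun h0 => hg0 ?_, ?_⟩
    · funext e
      rw [← twist_orient G z g e, h0]; rfl
    · rw [U1_eq, hd, flip_twist G (mul_self_eq_one_iff.2 hz)]
      funext e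
      simp [flipOp, cobd1]

lemma one_mem_phi1inv (Y : Set ℂ) : (1 : ℂ) ∈ phi1inv Y ↔ (1 : ℂ) ∈ Y := by
  norm_num [phi1inv]

lemma neg_one_mem_phi1inv (Y : Set ℂ) : (-1 : ℂ) ∈ phi1inv Y ↔ (-1 : ℂ) ∈ Y := by
  norm_num [phi1inv]

open Classical in
/-- The spectrum of `U₁ = S(2 d₁* d₁ − 1)` as a set, according to the
signs of `|E| − |V| + 𝟙[±1 ∈ σ(T)]`. -/
theorem statement10 (hG : G.Connected) (w₁ : G.Dart → ℂ)
    (hw₁ : ∀ u : V, ∑ e ∈ Finset.univ.filter (fun e : G.Dart => e.fst = u),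
      Complex.normSq (w₁ e) = 1) :
    (((G.edgeFinset.card : ℤ) - (Fintype.card V : ℤ)
        + (if (1 : ℂ) ∈ specV (TopW G w₁) then 1 else 0) > 0 ∧
      (G.edgeFinset.card : ℤ) - (Fintype.card V : ℤ)
        + (if (-1 : ℂ) ∈ specV (TopW G w₁) then 1 else 0) > 0) →
      specA G (U1 G w₁) = phi1inv (specV (TopW G w₁)) ∪ {1, -1}) ∧
    (((G.edgeFinset.card : ℤ) - (Fintype.card V : ℤ)
        + (if (1 : ℂ) ∈ specV (TopW G w₁) then 1 else 0) > 0 ∧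
      (G.edgeFinset.card : ℤ) - (Fintype.card V : ℤ)
        + (if (-1 : ℂ) ∈ specV (TopW G w₁) then 1 else 0) ≤ 0) →
      specA G (U1 G w₁) = phi1inv (specV (TopW G w₁)) ∪ {1}) ∧
    (((G.edgeFinset.card : ℤ) - (Fintype.card V : ℤ)
        + (if (1 : ℂ) ∈ specV (TopW G w₁) then 1 else 0) ≤ 0 ∧
      (G.edgeFinset.card : ℤ) - (Fintype.card V : ℤ)
        + (if (-1 : ℂ) ∈ specV (TopW G w₁) then 1 else 0) > 0) →
      specA G (U1 G w₁) = phi1inv (specV (TopW G w₁)) ∪ {-1}) ∧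
    (((G.edgeFinset.card : ℤ) - (Fintype.card V : ℤ)
        + (if (1 : ℂ) ∈ specV (TopW G w₁) then 1 else 0) ≤ 0 ∧
      (G.edgeFinset.card : ℤ) - (Fintype.card V : ℤ)
        + (if (-1 : ℂ) ∈ specV (TopW G w₁) then 1 else 0) ≤ 0) →
      specA G (U1 G w₁) = phi1inv (specV (TopW G w₁))) := by
  have key := mem_specA_iff G w₁ hw₁
  have hp := one_mem_phi1inv (specV (TopW G w₁))
  have hm := neg_one_mem_phi1inv (specV (TopW G w₁))
  have hcast : Fintype.card V < G.edgeFinset.card ↔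
      0 < (G.edgeFinset.card : ℤ) - (Fintype.card V : ℤ) := by omega
  simp only [hcast] at key
  generalize (G.edgeFinset.card : ℤ) - (Fintype.card V : ℤ) = n at key ⊢
  generalize phi1inv (specV (TopW G w₁)) = P at *
  generalize specV (TopW G w₁) = Y at *
  refine ⟨?_, ?_, ?_, ?_⟩ <;> rintro ⟨h1, h2⟩ <;> ext z <;>
    simp only [key, Set.mem_union, Set.mem_insert_iff, Set.mem_singleton_iff] <;>
    by_cases z1 : z = 1 <;> by_cases z2 : z = -1 <;>
    split_ifs at h1 h2 <;> grind

end
end
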